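/- If (λ,μ) ∈ C₀⁺, then the operator H^a_{λμ} has no eigenvalues in (8,+∞); and if (λ,μ) ∈ C₀⁻, then H^a_{λμ} has no eigenvalues in (−∞,0). -/

import Mathlib

/-!
Write `x = cos p₁`, `y = cos p₂`, `s = x + y`, `d = x - y`, so that the two rank-one perturbations are
built from `v₁ = d` and `v₂ = cos 2p₁ - cos 2p₂ = 2 s d`, while `E₀ = 4 - 2 s` and `8 - E₀ = 4 + 2 s`.
Both halves of the theorem say that a quadratic form with weight `W = 4 - 2 ε s ≥ 0` is nonnegative,
with `ε = 1` for `E₀` (no eigenvalue below `0`) and `ε = -1` for `8 - E₀` (no eigenvalue above `8`).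

Put `A = ∫ v₁ u`, `B = ∫ v₂ u` for a real `u ∈ L²`. Since `v₁ W = 4 v₁ - ε v₂`, the functions `v₁` and
`v₂ / W` pair with `u` in `L²(W)` to `4 A - ε B` and `B`. They are orthogonal there, because
`∫ v₁ v₂ = 0`, the first has squared norm `∫ v₁² W = 16 π²`, and the second has squared norm
`∫ v₂² / W ≤ 16 π²`: from `|d| ≤ 2 - ε s` one gets the pointwise bound `v₂² / W ≤ 4 - 2 ε s d²`, and
`∫ s d² = 0`. Bessel's inequality gives
`16 π² ∫ W u² ≥ (4 A - ε B)² + B² = 2 (8 A² - 4 ε A B + B²)` (`weight_form_bound`).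

The form `8 A² - 4 ε A B + B² + L A² + M B²` is nonnegative as soon as `L + 8 > 0`, `M + 1 > 0` and
`(L + 8)(M + 1) ≥ 4`. As `μ₀ ≤ 1`, this follows from membership in `C₀^±`, with
`(L, M) = ∓(l, m)`. Testing the eigenvalue equation against the real and imaginary
parts of an eigenfunction then forces both to vanish.
-/

open Real MeasureTheory Filter Topology

/-- The square `[-π,π]²` in `ℝ × ℝ`. -/
noncomputable def box : Set (ℝ × ℝ) := Set.Icc (-π, -π) (π, π)

/-- The dispersion relation `E₀(p) = 2((1 - cos p₁) + (1 - cos p₂))`. -/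
noncomputable def E0 (p : ℝ × ℝ) : ℝ := 2 * ((1 - cos p.1) + (1 - cos p.2))

/-- `a₁₁(z) = (1/(8π²)) ∫_{[-π,π]²} (cos p₁ - cos p₂)² / (E₀(p) - z) dp`. -/
noncomputable def a11 (z : ℝ) : ℝ :=
  (1 / (8 * π ^ 2)) * ∫ p in box, (cos p.1 - cos p.2) ^ 2 / (E0 p - z)

/-- `a₁₂(z) = (1/(8π²)) ∫_{[-π,π]²} (cos p₁ - cos p₂)(cos 2p₁ - cos 2p₂) / (E₀(p) - z) dp`. -/
noncomputable def a12 (z : ℝ) : ℝ :=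
  (1 / (8 * π ^ 2)) *
    ∫ p in box, (cos p.1 - cos p.2) * (cos (2 * p.1) - cos (2 * p.2)) / (E0 p - z)

/-- `a₂₂(z) = (1/(8π²)) ∫_{[-π,π]²} (cos 2p₁ - cos 2p₂)² / (E₀(p) - z) dp`. -/
noncomputable def a22 (z : ℝ) : ℝ :=
  (1 / (8 * π ^ 2)) * ∫ p in box, (cos (2 * p.1) - cos (2 * p.2)) ^ 2 / (E0 p - z)

/-- The Fredholm determinant `Δ_{λμ}(z) = (1 + λa₁₁(z))(1 + μa₂₂(z)) - λμ a₁₂(z)²`. -/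
noncomputable def Det (l m z : ℝ) : ℝ :=
  (1 + l * a11 z) * (1 + m * a22 z) - l * m * (a12 z) ^ 2

/-- Lebesgue measure restricted to the square `[-π,π]²`. -/
noncomputable def μbox : Measure (ℝ × ℝ) := volume.restrict box

/-- `z` is an eigenvalue of the operator `H^a_{λμ}` on `L²([-π,π]²)`, i.e.
`H^a_{λμ} f = z f` for some nonzero `f ∈ L²`. -/
def IsEigA (l m z : ℝ) : Prop :=
  ∃ f : Lp ℂ 2 μbox, f ≠ 0 ∧
    ∀ᵐ p ∂μbox,
      ((E0 p : ℝ) : ℂ) * f p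
        + ((l / (8 * π ^ 2) : ℝ) : ℂ) * ((cos p.1 - cos p.2 : ℝ) : ℂ) *
            (∫ q, ((cos q.1 - cos q.2 : ℝ) : ℂ) * f q ∂μbox)
        + ((m / (8 * π ^ 2) : ℝ) : ℂ) * ((cos (2 * p.1) - cos (2 * p.2) : ℝ) : ℂ) *
            (∫ q, ((cos (2 * q.1) - cos (2 * q.2) : ℝ) : ℂ) * f q ∂μbox)
      = (z : ℂ) * f p

/-- `μ₀ = 4(4-π)/(32-9π)`. -/
noncomputable def mu0 : ℝ := 4 * (4 - π) / (32 - 9 * π)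

/-- For `μ ≠ μ₀`, `λ⁺(μ) = 4/(μ - μ₀) + 8`. -/
noncomputable def lamPlus (m : ℝ) : ℝ := 4 / (m - mu0) + 8

/-- For `μ ≠ -μ₀`, `λ⁻(μ) = 4/(μ + μ₀) - 8`. -/
noncomputable def lamMinus (m : ℝ) : ℝ := 4 / (m + mu0) - 8

/-- The component `C₀⁺`. -/
noncomputable def C0plus : Set (ℝ × ℝ) := {p | p.2 < mu0 ∧ p.1 < lamPlus p.2}

/-- The component `C₀⁻`. -/
noncomputable def C0minus : Set (ℝ × ℝ) := {p | -mu0 < p.2 ∧ lamMinus p.2 < p.1}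

/-! ### Integrals over the square -/

/-- The interval `[-π,π]` with Lebesgue measure; `μbox` is its square. -/
noncomputable def μint : Measure ℝ := volume.restrict (Set.Icc (-π) π)

lemma μbox_eq : μbox = μint.prod μint := by
  rw [μbox, μint, Measure.prod_restrict, box, Set.Icc_prod_eq, Measure.volume_eq_prod]

instance : IsFiniteMeasure μint := by
  unfold μint; infer_instance

instance : IsFiniteMeasure μbox := by
  rw [μbox_eq]; infer_instance

lemma integral_μint (g : ℝ → ℝ) : ∫ x, g x ∂μint = ∫ x in (-π)..π, g x := by
  rw [μint, intervalIntegral.integral_of_le (by linarith [pi_pos]), integral_Icc_eq_integral_Ioc]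

lemma int_one : ∫ _x, (1 : ℝ) ∂μint = 2 * π := by
  rw [integral_μint]; simp; ring

lemma int_cos : ∫ x, cos x ∂μint = 0 := by
  rw [integral_μint]; simp

lemma int_cos_sq : ∫ x, cos x ^ 2 ∂μint = π := by
  rw [integral_μint, integral_cos_sq]; simp

lemma int_cos_cube : ∫ x, cos x ^ 3 ∂μint = 0 := by
  rw [integral_μint, integral_cos_pow_three]; simp

lemma integrable_of_bdd {g : ℝ × ℝ → ℝ} (hg : Continuous g) (C : ℝ) (hC : ∀ p, |g p| ≤ C) :
    Integrable g μbox :=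
  Integrable.of_bound hg.aestronglyMeasurable C (Eventually.of_forall hC)

lemma integrable_cos_monomial (i j : ℕ) :
    Integrable (fun p : ℝ × ℝ => cos p.1 ^ i * cos p.2 ^ j) μbox := by
  refine integrable_of_bdd (by fun_prop) 1 fun p => ?_
  rw [abs_mul, abs_pow, abs_pow]
  exact mul_le_one₀ (pow_le_one₀ (abs_nonneg _) (abs_cos_le_one _)) (by positivity)
    (pow_le_one₀ (abs_nonneg _) (abs_cos_le_one _))

lemma integral_cos_monomial (i j : ℕ) :
    ∫ p : ℝ × ℝ, cos p.1 ^ i * cos p.2 ^ j ∂μbox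
      = (∫ x, cos x ^ i ∂μint) * ∫ y, cos y ^ j ∂μint := by
  rw [μbox_eq]
  exact integral_prod_mul (fun x : ℝ => cos x ^ i) (fun y : ℝ => cos y ^ j)

lemma box_one : ∫ _p, (1 : ℝ) ∂μbox = 4 * π ^ 2 := by
  have h := integral_cos_monomial 0 0
  simp only [pow_zero, mul_one, int_one] at h
  rw [h]; ring

lemma integrable_d_sq : Integrable (fun p : ℝ × ℝ => (cos p.1 - cos p.2) ^ 2) μbox := by
  have h := ((integrable_cos_monomial 2 0).sub ((integrable_cos_monomial 1 1).const_mul 2)).add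
    (integrable_cos_monomial 0 2)
  refine h.congr (Eventually.of_forall fun p => ?_)
  simp only [Pi.add_apply, Pi.sub_apply]
  ring

lemma box_d_sq : ∫ p : ℝ × ℝ, (cos p.1 - cos p.2) ^ 2 ∂μbox = 4 * π ^ 2 := by
  have e : (fun p : ℝ × ℝ => (cos p.1 - cos p.2) ^ 2) = fun p =>
      cos p.1 ^ 2 * cos p.2 ^ 0 - 2 * (cos p.1 ^ 1 * cos p.2 ^ 1) + cos p.1 ^ 0 * cos p.2 ^ 2 := by
    funext p; ring
  rw [e, integral_add, integral_sub, integral_const_mul]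
  · simp only [integral_cos_monomial]
    simp only [pow_zero, pow_one, int_one, int_cos, int_cos_sq]
    ring
  · exact integrable_cos_monomial 2 0
  · exact (integrable_cos_monomial 1 1).const_mul 2
  · exact (integrable_cos_monomial 2 0).sub ((integrable_cos_monomial 1 1).const_mul 2)
  · exact integrable_cos_monomial 0 2

lemma integrable_s_d_sq :
    Integrable (fun p : ℝ × ℝ => (cos p.1 + cos p.2) * (cos p.1 - cos p.2) ^ 2) μbox := by
  have h := (((integrable_cos_monomial 3 0).sub (integrable_cos_monomial 2 1)).sub
    (integrable_cos_monomial 1 2)).add (integrable_cos_monomial 0 3)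
  refine h.congr (Eventually.of_forall fun p => ?_)
  simp only [Pi.add_apply, Pi.sub_apply]
  ring

lemma box_s_d_sq :
    ∫ p : ℝ × ℝ, (cos p.1 + cos p.2) * (cos p.1 - cos p.2) ^ 2 ∂μbox = 0 := by
  have e : (fun p : ℝ × ℝ => (cos p.1 + cos p.2) * (cos p.1 - cos p.2) ^ 2) = fun p =>
      cos p.1 ^ 3 * cos p.2 ^ 0 - cos p.1 ^ 2 * cos p.2 ^ 1 - cos p.1 ^ 1 * cos p.2 ^ 2
        + cos p.1 ^ 0 * cos p.2 ^ 3 := by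
    funext p; ring
  rw [e, integral_add, integral_sub, integral_sub]
  · simp only [integral_cos_monomial]
    simp only [pow_zero, pow_one, int_one, int_cos, int_cos_sq, int_cos_cube]
    ring
  · exact integrable_cos_monomial 3 0
  · exact integrable_cos_monomial 2 1
  · exact (integrable_cos_monomial 3 0).sub (integrable_cos_monomial 2 1)
  · exact integrable_cos_monomial 1 2
  · exact ((integrable_cos_monomial 3 0).sub (integrable_cos_monomial 2 1)).sub
      (integrable_cos_monomial 1 2)
  · exact integrable_cos_monomial 0 3

/-! ### The lower bound for the weighted form -/

/-- The pointwise form of Bessel's inequality: the right-hand side dominates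
`W (u - α v₁ - β v₂ / W)²`, where `v₂² / W` has been replaced by its upper bound `4 - 2 ε s d²`. -/
lemma pointwise_bessel (ε : ℝ) (hε : ε = 1 ∨ ε = -1) (x y u α β : ℝ)
    (hx : |x| ≤ 1) (hy : |y| ≤ 1) :
    0 ≤ (4 - 2 * ε * (x + y)) * u ^ 2
      - 2 * α * (4 * ((x - y) * u) - ε * (2 * (x + y) * (x - y) * u))
      - 2 * β * (2 * (x + y) * (x - y) * u)
      + α ^ 2 * (4 * (x - y) ^ 2 - 2 * ε * ((x + y) * (x - y) ^ 2))
      + 4 * α * β * ((x + y) * (x - y) ^ 2)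
      + β ^ 2 * (4 - 2 * ε * ((x + y) * (x - y) ^ 2)) := by
  obtain ⟨hx1, hx2⟩ := abs_le.mp hx
  obtain ⟨hy1, hy2⟩ := abs_le.mp hy
  have hε2 : ε ^ 2 = 1 := by rcases hε with rfl | rfl <;> norm_num
  set s := x + y with hs
  set d := x - y with hd
  set W := 4 - 2 * ε * s with hW
  have hdW : 2 * |d| ≤ W := by
    rcases abs_cases d with ⟨h, _⟩ | ⟨h, _⟩ <;> rw [h] <;>
      rcases hε with rfl | rfl <;> linarith
  have hW0 : 0 ≤ W := le_trans (by positivity) hdW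
  rcases hW0.eq_or_lt with h0 | hpos
  · have hd0 : d = 0 := abs_eq_zero.mp (le_antisymm (by linarith) (abs_nonneg d))
    rw [← h0, hd0]
    nlinarith [sq_nonneg β]
  · have hK : (2 * s * d) ^ 2 / W ≤ 4 - 2 * ε * (s * d ^ 2) := by
      rw [div_le_iff₀ hpos]
      have h4 : 4 * s ^ 2 = (4 - W) ^ 2 := by
        rw [hW]; linear_combination (-4 * s ^ 2) * hε2
      have h5 : 2 * ε * s = 4 - W := by rw [hW]; ring
      have e1 : (2 * s * d) ^ 2 = (4 - W) ^ 2 * d ^ 2 := by rw [← h4]; ring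
      have e2 : 4 - 2 * ε * (s * d ^ 2) = 4 - (4 - W) * d ^ 2 := by rw [← h5]; ring
      rw [e1, e2]
      -- The difference of the two sides is `4 (W + W d² - 4 d²) ≥ 4 W (1 - |d|)²`.
      have h6 : d ^ 2 = |d| ^ 2 := (sq_abs d).symm
      have h7 : 0 ≤ |d| * (W - 2 * |d|) := mul_nonneg (abs_nonneg d) (by linarith)
      have h8 : 0 ≤ W * (1 - |d|) ^ 2 := by positivity
      rw [h6]
      nlinarith
    have hmain : 0 ≤ W * (u - α * d - β * (2 * s * d / W)) ^ 2 := by positivity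
    have e : W * (u - α * d - β * (2 * s * d / W)) ^ 2
        = W * u ^ 2 - 2 * α * (W * d * u) - 2 * β * (2 * s * d * u) + α ^ 2 * (W * d ^ 2)
          + 4 * α * β * (s * d ^ 2) + β ^ 2 * ((2 * s * d) ^ 2 / W) := by
      field_simp
      ring
    have h9 := mul_le_mul_of_nonneg_left hK (sq_nonneg β)
    have e3 : W * d * u = 4 * (d * u) - ε * (2 * s * d * u) := by rw [hW]; ring
    have e4 : W * d ^ 2 = 4 * d ^ 2 - 2 * ε * (s * d ^ 2) := by rw [hW]; ring
    rw [e, e3, e4] at hmain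
    linarith

lemma v2_eq (p : ℝ × ℝ) : cos (2 * p.1) - cos (2 * p.2)
    = 2 * (cos p.1 + cos p.2) * (cos p.1 - cos p.2) := by
  rw [cos_two_mul, cos_two_mul]; ring

lemma integrable_v1_mul {u : ℝ × ℝ → ℝ} (hu : Integrable u μbox) :
    Integrable (fun p : ℝ × ℝ => (cos p.1 - cos p.2) * u p) μbox := by
  refine hu.bdd_mul (c := 2) (by fun_prop) (Eventually.of_forall fun p => ?_)
  rw [norm_eq_abs, abs_le]
  constructor <;>
    linarith [neg_one_le_cos p.1, cos_le_one p.1, neg_one_le_cos p.2, cos_le_one p.2]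

lemma integrable_v2_mul {u : ℝ × ℝ → ℝ} (hu : Integrable u μbox) :
    Integrable (fun p : ℝ × ℝ => (cos (2 * p.1) - cos (2 * p.2)) * u p) μbox := by
  refine hu.bdd_mul (c := 2) (by fun_prop) (Eventually.of_forall fun p => ?_)
  rw [norm_eq_abs, abs_le]
  constructor <;>
    linarith [neg_one_le_cos (2 * p.1), cos_le_one (2 * p.1), neg_one_le_cos (2 * p.2),
      cos_le_one (2 * p.2)]

lemma integrable_weight_mul (ε : ℝ) {u : ℝ × ℝ → ℝ} (hu : Integrable u μbox) :
    Integrable (fun p : ℝ × ℝ => (4 - 2 * ε * (cos p.1 + cos p.2)) * u p) μbox := by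
  refine hu.bdd_mul (c := 4 + 2 * |ε| * 2) (by fun_prop) (Eventually.of_forall fun p => ?_)
  have h1 : |cos p.1 + cos p.2| ≤ 2 := by
    rw [abs_le]
    constructor <;>
      linarith [neg_one_le_cos p.1, cos_le_one p.1, neg_one_le_cos p.2, cos_le_one p.2]
  calc ‖4 - 2 * ε * (cos p.1 + cos p.2)‖ ≤ |4| + |2 * ε * (cos p.1 + cos p.2)| := abs_sub _ _
    _ = 4 + 2 * |ε| * |cos p.1 + cos p.2| := by rw [abs_mul, abs_mul]; norm_num
    _ ≤ 4 + 2 * |ε| * 2 := by gcongr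

/-- Bessel's inequality in `L²` with weight `W = 4 - 2 ε s` for the orthogonal pair `v₁`, `v₂ / W`. -/
lemma weight_form_bound (ε : ℝ) (hε : ε = 1 ∨ ε = -1) (u : ℝ × ℝ → ℝ) (hu : MemLp u 2 μbox) :
    (4 * (∫ p, (cos p.1 - cos p.2) * u p ∂μbox)
        - ε * ∫ p, (cos (2 * p.1) - cos (2 * p.2)) * u p ∂μbox) ^ 2
      + (∫ p, (cos (2 * p.1) - cos (2 * p.2)) * u p ∂μbox) ^ 2
    ≤ 16 * π ^ 2 * ∫ p, (4 - 2 * ε * (cos p.1 + cos p.2)) * u p ^ 2 ∂μbox := by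
  have hu1 : Integrable u μbox := hu.integrable one_le_two
  have i1 := integrable_v1_mul hu1
  have i2 := integrable_v2_mul hu1
  have iW := integrable_weight_mul ε hu.integrable_sq
  have key : ∀ α β : ℝ, 0 ≤ (∫ p, (4 - 2 * ε * (cos p.1 + cos p.2)) * u p ^ 2 ∂μbox)
      - 2 * α * (4 * (∫ p, (cos p.1 - cos p.2) * u p ∂μbox)
        - ε * ∫ p, (cos (2 * p.1) - cos (2 * p.2)) * u p ∂μbox)
      - 2 * β * (∫ p, (cos (2 * p.1) - cos (2 * p.2)) * u p ∂μbox)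
      + α ^ 2 * (16 * π ^ 2) + β ^ 2 * (16 * π ^ 2) := by
    intro α β
    have j1 := iW.sub ((((i1.const_mul 4).sub (i2.const_mul ε))).const_mul (2 * α))
    have j2 := j1.sub (i2.const_mul (2 * β))
    have k1 := ((integrable_d_sq.const_mul 4).sub (integrable_s_d_sq.const_mul (2 * ε)))
    have j3 := j2.add (k1.const_mul (α ^ 2))
    have j4 := j3.add (integrable_s_d_sq.const_mul (4 * α * β))
    have k2 := ((integrable_const (μ := μbox) (4 : ℝ)).sub (integrable_s_d_sq.const_mul (2 * ε)))
    have hnn := integral_nonneg (μ := μbox) (f := fun p : ℝ × ℝ =>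
      (4 - 2 * ε * (cos p.1 + cos p.2)) * u p ^ 2
      - 2 * α * (4 * ((cos p.1 - cos p.2) * u p)
          - ε * ((cos (2 * p.1) - cos (2 * p.2)) * u p))
      - 2 * β * ((cos (2 * p.1) - cos (2 * p.2)) * u p)
      + α ^ 2 * (4 * (cos p.1 - cos p.2) ^ 2
          - 2 * ε * ((cos p.1 + cos p.2) * (cos p.1 - cos p.2) ^ 2))
      + 4 * α * β * ((cos p.1 + cos p.2) * (cos p.1 - cos p.2) ^ 2)
      + β ^ 2 * (4 - 2 * ε * ((cos p.1 + cos p.2) * (cos p.1 - cos p.2) ^ 2)))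
      (fun p => by
        have := pointwise_bessel ε hε (cos p.1) (cos p.2) (u p) α β (abs_cos_le_one _)
          (abs_cos_le_one _)
        simp only [v2_eq p]
        exact this)
    have h4 : ∫ _p, (4 : ℝ) ∂μbox = 16 * π ^ 2 := by
      have h := integral_const_mul (μ := μbox) (4 : ℝ) (fun _ => (1 : ℝ))
      rw [box_one, mul_one] at h
      rw [h]; ring
    erw [integral_add j4 (k2.const_mul (β ^ 2)),
      integral_add j3 (integrable_s_d_sq.const_mul (4 * α * β)),
      integral_add j2 (k1.const_mul (α ^ 2)), integral_sub j1 (i2.const_mul (2 * β)),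
      integral_sub iW ((((i1.const_mul 4).sub (i2.const_mul ε))).const_mul (2 * α)),
      integral_const_mul, integral_const_mul, integral_const_mul, integral_const_mul,
      integral_const_mul, integral_sub (i1.const_mul 4) (i2.const_mul ε),
      integral_sub (integrable_d_sq.const_mul 4) (integrable_s_d_sq.const_mul (2 * ε)),
      integral_sub (integrable_const (μ := μbox) (4 : ℝ)) (integrable_s_d_sq.const_mul (2 * ε)),
      integral_const_mul, integral_const_mul, integral_const_mul, integral_const_mul,
      box_d_sq, box_s_d_sq, h4] at hnn
    linarith
  set B := ∫ p, (cos (2 * p.1) - cos (2 * p.2)) * u p ∂μbox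
  set D := 4 * (∫ p, (cos p.1 - cos p.2) * u p ∂μbox) - ε * B
  have hpi : (0 : ℝ) < 16 * π ^ 2 := by positivity
  have h := mul_nonneg hpi.le (key (D / (16 * π ^ 2)) (B / (16 * π ^ 2)))
  field_simp at h
  nlinarith

/-! ### Absence of eigenvalues -/

/-- A real `L²` solution of `(W + w) u + (L v₁ ⟨v₁, u⟩ + M v₂ ⟨v₂, u⟩) / (8 π²) = 0` with `w > 0`
vanishes when the matrix `((L + 8, -2 ε), (-2 ε, M + 1))` is positive semidefinite. -/
lemma real_solution_zero (ε : ℝ) (hε : ε = 1 ∨ ε = -1) (L M w : ℝ) (hw : 0 < w)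
    (hL : 0 < L + 8) (hLM : 4 ≤ (L + 8) * (M + 1))
    (u : ℝ × ℝ → ℝ) (hu : MemLp u 2 μbox)
    (heq : ∀ᵐ p ∂μbox, (4 - 2 * ε * (cos p.1 + cos p.2) + w) * u p
      + L / (8 * π ^ 2) * (cos p.1 - cos p.2) * (∫ q, (cos q.1 - cos q.2) * u q ∂μbox)
      + M / (8 * π ^ 2) * (cos (2 * p.1) - cos (2 * p.2))
        * (∫ q, (cos (2 * q.1) - cos (2 * q.2)) * u q ∂μbox) = 0) :
    u =ᵐ[μbox] 0 := by
  have hb := weight_form_bound ε hε u hu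
  have hu1 : Integrable u μbox := hu.integrable one_le_two
  have i1 := integrable_v1_mul hu1
  have i2 := integrable_v2_mul hu1
  have isq := hu.integrable_sq
  have iW := integrable_weight_mul ε isq
  set A := ∫ q, (cos q.1 - cos q.2) * u q ∂μbox with hA
  set B := ∫ q, (cos (2 * q.1) - cos (2 * q.2)) * u q ∂μbox with hB
  have hzero : (∫ p, (4 - 2 * ε * (cos p.1 + cos p.2)) * u p ^ 2 ∂μbox)
      + w * (∫ p, u p ^ 2 ∂μbox) + (L / (8 * π ^ 2) * A) * A + (M / (8 * π ^ 2) * B) * B = 0 := by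
    have h0 : ∫ p, ((4 - 2 * ε * (cos p.1 + cos p.2)) * u p ^ 2 + w * u p ^ 2
        + (L / (8 * π ^ 2) * A) * ((cos p.1 - cos p.2) * u p)
        + (M / (8 * π ^ 2) * B) * ((cos (2 * p.1) - cos (2 * p.2)) * u p)) ∂μbox = 0 := by
      refine integral_eq_zero_of_ae ?_
      filter_upwards [heq] with p hp
      simp only [Pi.zero_apply]
      linear_combination u p * hp
    have j1 := iW.add (isq.const_mul w)
    have j2 := j1.add (i1.const_mul (L / (8 * π ^ 2) * A))
    erw [integral_add j2 (i2.const_mul (M / (8 * π ^ 2) * B)),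
      integral_add j1 (i1.const_mul (L / (8 * π ^ 2) * A)),
      integral_add iW (isq.const_mul w), integral_const_mul, integral_const_mul,
      integral_const_mul] at h0
    exact h0
  set I := ∫ p, (4 - 2 * ε * (cos p.1 + cos p.2)) * u p ^ 2 ∂μbox
  have hnn : 0 ≤ ∫ p, u p ^ 2 ∂μbox := integral_nonneg fun p => sq_nonneg _
  have hε2 : ε ^ 2 = 1 := by rcases hε with rfl | rfl <;> norm_num
  -- Completing the square in `A`.
  have hform : 0 ≤ (L + 8) * A ^ 2 - 4 * ε * A * B + (M + 1) * B ^ 2 := by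
    have h1 : 0 ≤ (L + 8) * ((L + 8) * A ^ 2 - 4 * ε * A * B + (M + 1) * B ^ 2) := by
      have e : (L + 8) * ((L + 8) * A ^ 2 - 4 * ε * A * B + (M + 1) * B ^ 2)
          = ((L + 8) * A - 2 * ε * B) ^ 2 + ((L + 8) * (M + 1) - 4) * B ^ 2 := by
        linear_combination (-4 * B ^ 2) * hε2
      rw [e]
      have : 0 ≤ (L + 8) * (M + 1) - 4 := by linarith
      positivity
    exact nonneg_of_mul_nonneg_right h1 hL
  have hpi : (0 : ℝ) < 16 * π ^ 2 := by positivity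
  have hsum : 16 * π ^ 2 * I + 16 * π ^ 2 * (w * ∫ p, u p ^ 2 ∂μbox)
      + 2 * L * A ^ 2 + 2 * M * B ^ 2 = 0 := by
    have e1 : 16 * π ^ 2 * (L / (8 * π ^ 2) * A * A) = 2 * L * A ^ 2 := by field_simp; ring
    have e2 : 16 * π ^ 2 * (M / (8 * π ^ 2) * B * B) = 2 * M * B ^ 2 := by field_simp; ring
    linear_combination (16 * π ^ 2) * hzero - e1 - e2
  have hexp : (4 * A - ε * B) ^ 2 + B ^ 2 = 16 * A ^ 2 - 8 * ε * A * B + 2 * B ^ 2 := by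
    linear_combination B ^ 2 * hε2
  have hle : 16 * π ^ 2 * (w * ∫ p, u p ^ 2 ∂μbox) ≤ 0 := by nlinarith
  have hU : ∫ p, u p ^ 2 ∂μbox = 0 := by
    refine le_antisymm ?_ hnn
    by_contra hc
    push Not at hc
    have : 0 < 16 * π ^ 2 * (w * ∫ p, u p ^ 2 ∂μbox) := by positivity
    linarith
  have hae := (integral_eq_zero_iff_of_nonneg (fun p => sq_nonneg (u p)) isq).mp hU
  filter_upwards [hae] with p hp
  simpa using hp

/-- The eigenvalue equation has real coefficients, so the real and imaginary parts of an
eigenfunction are real solutions. -/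
lemma not_isEigA_of_real (l m z : ℝ)
    (h : ∀ u : ℝ × ℝ → ℝ, MemLp u 2 μbox →
      (∀ᵐ p ∂μbox, E0 p * u p
        + l / (8 * π ^ 2) * (cos p.1 - cos p.2) * (∫ q, (cos q.1 - cos q.2) * u q ∂μbox)
        + m / (8 * π ^ 2) * (cos (2 * p.1) - cos (2 * p.2))
          * (∫ q, (cos (2 * q.1) - cos (2 * q.2)) * u q ∂μbox) = z * u p) →
      u =ᵐ[μbox] 0) : ¬ IsEigA l m z := by
  rintro ⟨f, hf, heq⟩
  apply hf
  have hmem : MemLp f 2 μbox := Lp.memLp f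
  have hint : Integrable f μbox := hmem.integrable one_le_two
  have j1 : Integrable (fun q : ℝ × ℝ => ((cos q.1 - cos q.2 : ℝ) : ℂ) * f q) μbox := by
    refine hint.bdd_mul (c := 2) (by fun_prop) (Eventually.of_forall fun p => ?_)
    rw [Complex.norm_real, norm_eq_abs, abs_le]
    constructor <;>
      linarith [neg_one_le_cos p.1, cos_le_one p.1, neg_one_le_cos p.2, cos_le_one p.2]
  have j2 : Integrable (fun q : ℝ × ℝ => ((cos (2 * q.1) - cos (2 * q.2) : ℝ) : ℂ) * f q)
      μbox := by
    refine hint.bdd_mul (c := 2) (by fun_prop) (Eventually.of_forall fun p => ?_)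
    rw [Complex.norm_real, norm_eq_abs, abs_le]
    constructor <;>
      linarith [neg_one_le_cos (2 * p.1), cos_le_one (2 * p.1), neg_one_le_cos (2 * p.2),
        cos_le_one (2 * p.2)]
  have re1 : (∫ q, ((cos q.1 - cos q.2 : ℝ) : ℂ) * f q ∂μbox).re
      = ∫ q, (cos q.1 - cos q.2) * (f q).re ∂μbox := by
    have := (integral_re j1).symm
    simpa only [RCLike.re_eq_complex_re, Complex.re_ofReal_mul] using this
  have im1 : (∫ q, ((cos q.1 - cos q.2 : ℝ) : ℂ) * f q ∂μbox).im
      = ∫ q, (cos q.1 - cos q.2) * (f q).im ∂μbox := by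
    have := (integral_im j1).symm
    simpa only [RCLike.im_eq_complex_im, Complex.im_ofReal_mul] using this
  have re2 : (∫ q, ((cos (2 * q.1) - cos (2 * q.2) : ℝ) : ℂ) * f q ∂μbox).re
      = ∫ q, (cos (2 * q.1) - cos (2 * q.2)) * (f q).re ∂μbox := by
    have := (integral_re j2).symm
    simpa only [RCLike.re_eq_complex_re, Complex.re_ofReal_mul] using this
  have im2 : (∫ q, ((cos (2 * q.1) - cos (2 * q.2) : ℝ) : ℂ) * f q ∂μbox).im
      = ∫ q, (cos (2 * q.1) - cos (2 * q.2)) * (f q).im ∂μbox := by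
    have := (integral_im j2).symm
    simpa only [RCLike.im_eq_complex_im, Complex.im_ofReal_mul] using this
  have hre := h (fun p => (f p).re) hmem.re (by
    filter_upwards [heq] with p hp
    have := congrArg Complex.re hp
    simp only [Complex.add_re, ← Complex.ofReal_mul, Complex.re_ofReal_mul, re1, re2] at this
    exact this)
  have him := h (fun p => (f p).im) hmem.im (by
    filter_upwards [heq] with p hp
    have := congrArg Complex.im hp
    simp only [Complex.add_im, ← Complex.ofReal_mul, Complex.im_ofReal_mul, im1, im2] at this
    exact this)
  rw [Lp.eq_zero_iff_ae_eq_zero]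
  filter_upwards [hre, him] with p h1 h2
  exact Complex.ext h1 h2

lemma mu0_le_one : mu0 ≤ 1 := by
  have := pi_lt_d2
  rw [mu0, div_le_one (by linarith)]
  linarith

/-- For `(λ,μ) ∈ C₀⁺` there are no eigenvalues of `H^a_{λμ}` above `8`;
for `(λ,μ) ∈ C₀⁻` there are no eigenvalues below `0`. -/
theorem no_eig_on_C0 (l m : ℝ) :
    ((l, m) ∈ C0plus → ∀ z : ℝ, 8 < z → ¬ IsEigA l m z) ∧
    ((l, m) ∈ C0minus → ∀ z : ℝ, z < 0 → ¬ IsEigA l m z) := by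
  have hmu := mu0_le_one
  constructor
  · rintro ⟨hm, hl⟩ z hz
    simp only [lamPlus] at hm hl
    have hpos : 0 < mu0 - m := by linarith
    have hl' : 4 / (mu0 - m) < 8 - l := by
      have e : 4 / (m - mu0) = -(4 / (mu0 - m)) := by rw [← neg_sub mu0 m, div_neg]
      linarith
    have hL : 0 < -l + 8 := by linarith [div_pos (by norm_num : (0 : ℝ) < 4) hpos]
    rw [div_lt_iff₀ hpos] at hl'
    have hLM : 4 ≤ (-l + 8) * (-m + 1) := by
      nlinarith [mul_nonneg hL.le (sub_nonneg.mpr hmu)]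
    refine not_isEigA_of_real l m z fun u hu heq => ?_
    refine real_solution_zero (-1) (Or.inr rfl) (-l) (-m) (z - 8) (by linarith) hL hLM u hu ?_
    filter_upwards [heq] with p hp
    simp only [E0] at hp
    linear_combination -hp
  · rintro ⟨hm, hl⟩ z hz
    simp only [lamMinus] at hm hl
    have hpos : 0 < m + mu0 := by linarith
    have hl' : 4 / (m + mu0) < l + 8 := by linarith
    have hL : 0 < l + 8 := by linarith [div_pos (by norm_num : (0 : ℝ) < 4) hpos]
    rw [div_lt_iff₀ hpos] at hl'
    have hLM : 4 ≤ (l + 8) * (m + 1) := by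
      nlinarith [mul_nonneg hL.le (sub_nonneg.mpr hmu)]
    refine not_isEigA_of_real l m z fun u hu heq => ?_
    refine real_solution_zero 1 (Or.inl rfl) l m (-z) (by linarith) hL hLM u hu ?_
    filter_upwards [heq] with p hp
    simp only [E0] at hp
    linear_combination hp
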